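/- For every nonnegative integer l and every real t, Σ_{n≥0} f^S_{n,2l} · t^{2n}/(2n)! = det_{0≤j,k<l} ( I_{j−k}(2t) − I_{j+k+2}(2t) ). -/

import Mathlib

noncomputable section

/-- `lisLE π l` means the longest increasing subsequence of the permutation `π`
has length at most `l`. -/
def lisLE {N : ℕ} (π : Equiv.Perm (Fin N)) (l : ℕ) : Prop :=
  ∀ (k : ℕ) (f : Fin k → Fin N), StrictMono f → StrictMono (fun i => π (f i)) → k ≤ l

/-- `f^S_{n,l}`: the number of permutations `π` of `{1,…,2n}` with `π = ι∘π⁻¹∘ι`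
and `π(x) ≠ ι(x)` for all `x` (where `ι(x) = 2n+1-x`), whose longest increasing
subsequence has length at most `l`. -/
def fSCount (n l : ℕ) : ℕ :=
  Nat.card {π : Equiv.Perm (Fin (2 * n)) //
    π = Fin.revPerm * π⁻¹ * Fin.revPerm ∧ (∀ x, π x ≠ Fin.revPerm x) ∧ lisLE π l}

/-- The modified Bessel function of the first kind:
`besselI j t = I_j(2t) = Σ_{m≥0} t^{2m+|j|}/(m!·(m+|j|)!)`. -/
def besselI (j : ℤ) (t : ℝ) : ℝ :=
  ∑' m : ℕ, t ^ (2 * m + j.natAbs) /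
    ((Nat.factorial m : ℝ) * (Nat.factorial (m + j.natAbs) : ℝ))

open Finset

/-- The closed type-C Weyl chamber of integer vectors, increasing convention. -/
def Chamber {l : ℕ} (v : Fin l → ℤ) : Prop := Monotone v ∧ ∀ r, 0 ≤ v r

/-- The shape of a lattice word with blanks; the head is the last letter. -/
def shape {l : ℕ} : List (Option (Fin l)) → Fin l → ℤ
  | [] => 0
  | none :: T => shape T
  | some s :: T => shape T + Pi.single s 1

/-- A word is valid if all its initial (that is, tail) shapes lie in the chamber. -/
def Valid {l : ℕ} : List (Option (Fin l)) → Prop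
  | [] => True
  | o :: T => Valid T ∧ Chamber (shape (o :: T))

/-- The last index at which `v` takes the value `v s`. -/
def lastRow {l : ℕ} (v : Fin l → ℤ) (s : Fin l) : Fin l :=
  (univ.filter fun r => v r = v s).max' ⟨s, by simp⟩

open Classical in
/-- Growth-diagram insertion of the letter `i` in a word, returning the new word and the row in
which the shape has grown; `none` if `i` is already present or if there is no empty row left. -/
def ins {l : ℕ} : List (Option (Fin l)) → ℕ → Option (List (Option (Fin l)) × Fin l)
  | [], _ => none
  | none :: T, i =>
    if i = T.length then
      if h : ∃ r, shape T r = 0 then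
        some (some (lastRow (shape T) h.choose) :: T, lastRow (shape T) h.choose)
      else none
    else (ins T i).map fun p => (none :: p.1, p.2)
  | some s :: T, i =>
    (ins T i).map fun p =>
      if p.2 = s then
        (some (lastRow (shape T + Pi.single s 1) s) :: p.1, lastRow (shape T + Pi.single s 1) s)
      else (some s :: p.1, p.2)

/-- Sum of `F` over all insertions in `T`. -/
def insSum {l : ℕ} (T : List (Option (Fin l))) (F : List (Option (Fin l)) × Fin l → ℕ) : ℕ :=
  ∑ i ∈ range T.length, (ins T i).elim 0 F

open Classical in
/-- Sum of `F` over all valid words of length `j` and shape `v`. -/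
def tabSum {l : ℕ} : ℕ → (Fin l → ℤ) → (List (Option (Fin l)) → ℕ) → ℕ
  | 0, v, F => if v = 0 then F [] else 0
  | j + 1, v, F => tabSum j v (fun T => F (none :: T)) +
      ∑ s, if Chamber (v - Pi.single s 1) then
        tabSum j (v - Pi.single s 1) (fun T => F (some s :: T)) else 0

variable {l : ℕ}

lemma lastRow_eq (v : Fin l → ℤ) (s : Fin l) : v (lastRow v s) = v s := by
  have := (univ.filter fun r => v r = v s).max'_mem ⟨s, by simp⟩
  simpa [lastRow] using this

lemma le_lastRow (v : Fin l → ℤ) {r s : Fin l} (h : v r = v s) : r ≤ lastRow v s :=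
  Finset.le_max' _ _ (by simpa using h)

lemma lastRow_congr (v : Fin l → ℤ) {r s : Fin l} (h : v r = v s) : lastRow v r = lastRow v s :=
  le_antisymm (le_lastRow v ((lastRow_eq v r).trans h))
    (le_lastRow v ((lastRow_eq v s).trans h.symm))

lemma chamber_add_iff {v : Fin l → ℤ} (hv : Chamber v) (c : Fin l) :
    Chamber (v + Pi.single c 1) ↔ ∀ r, c < r → v c < v r := by
  constructor
  · intro h r hr
    have := h.1 hr.le
    simp [hr.ne'] at this
    omega
  · intro h
    refine ⟨fun a b hab => ?_, fun r => ?_⟩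
    · have h1 := hv.1 hab
      rcases hab.eq_or_lt with rfl | hlt
      · rfl
      have h2 := h b
      simp only [Pi.add_apply, Pi.single_apply]
      split_ifs with h3 h4 h4
      · omega
      · subst h3; have := h2 hlt; omega
      · omega
      · omega
    · have := hv.2 r
      simp only [Pi.add_apply, Pi.single_apply]
      split_ifs <;> omega

lemma chamber_sub_iff {v : Fin l → ℤ} (hv : Chamber v) (s : Fin l) :
    Chamber (v - Pi.single s 1) ↔ 0 < v s ∧ ∀ r, r < s → v r < v s := by
  constructor
  · intro h
    refine ⟨?_, fun r hr => ?_⟩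
    · have := h.2 s
      simp at this
      omega
    · have := h.1 hr.le
      simp [hr.ne] at this
      omega
  · intro h
    refine ⟨fun a b hab => ?_, fun r => ?_⟩
    · have h1 := hv.1 hab
      rcases hab.eq_or_lt with rfl | hlt
      · rfl
      have h2 := h.2 a
      simp only [Pi.sub_apply, Pi.single_apply]
      split_ifs with h3 h4 h4
      · omega
      · omega
      · subst h4; have := h2 hlt; omega
      · omega
    · have := hv.2 r
      simp only [Pi.sub_apply, Pi.single_apply]
      split_ifs with h3
      · subst h3; omega
      · omega

lemma chamber_lastRow {v : Fin l → ℤ} (hv : Chamber v) (s : Fin l) :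
    Chamber (v + Pi.single (lastRow v s) 1) := by
  rw [chamber_add_iff hv]
  intro r hr
  have h1 := hv.1 hr.le
  refine lt_of_le_of_ne h1 fun h => ?_
  exact absurd (le_lastRow v (h.symm.trans (lastRow_eq v s))) (not_le.2 hr)

lemma lastRow_of_chamber {v : Fin l → ℤ} (hv : Chamber v) {c : Fin l}
    (h : Chamber (v + Pi.single c 1)) : lastRow v c = c := by
  refine le_antisymm (not_lt.1 fun hlt => ?_) (le_lastRow v rfl)
  have := (chamber_add_iff hv c).1 h _ hlt
  rw [lastRow_eq v] at this
  exact lt_irrefl _ this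

lemma tabSum_congr (j : ℕ) : ∀ (v : Fin l → ℤ) (F F' : List (Option (Fin l)) → ℕ), Chamber v →
    (∀ T, Valid T → T.length = j → shape T = v → F T = F' T) → tabSum j v F = tabSum j v F' := by
  induction j with
  | zero =>
    intro v F F' hv h
    simp only [tabSum]
    split_ifs with h0
    · exact h [] trivial rfl h0.symm
    · rfl
  | succ j ih =>
    intro v F F' hv h
    simp only [tabSum]
    congr 1
    · refine ih _ _ _ hv fun T h1 h2 h3 => h _ ⟨h1, ?_⟩ (by simp [h2]) (by simp [shape, h3])
      simpa [shape, h3] using hv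
    · refine sum_congr rfl fun s _ => ?_
      split_ifs with hs
      · refine ih _ _ _ hs fun T h1 h2 h3 => h _ ⟨h1, ?_⟩ (by simp [h2]) (by simp [shape, h3])
        simpa [shape, h3] using hv
      · rfl

lemma tabSum_add (j : ℕ) : ∀ (v : Fin l → ℤ) (F F' : List (Option (Fin l)) → ℕ),
    tabSum j v (fun T => F T + F' T) = tabSum j v F + tabSum j v F' := by
  induction j with
  | zero => intro v F F'; simp only [tabSum]; split_ifs <;> simp
  | succ j ih =>
    intro v F F'
    simp only [tabSum, ih]
    rw [add_add_add_comm, ← sum_add_distrib]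
    congr 1
    refine sum_congr rfl fun s _ => ?_
    split_ifs <;> simp

lemma tabSum_zero (j : ℕ) : ∀ (v : Fin l → ℤ), tabSum j v (fun _ => 0) = 0 := by
  induction j with
  | zero => intro v; simp [tabSum]
  | succ j ih => intro v; simp [tabSum, ih]

lemma tabSum_zero_shape (j : ℕ) : ∀ F : List (Option (Fin l)) → ℕ,
    tabSum j 0 F = F (List.replicate j none) := by
  have h0 : Chamber (0 : Fin l → ℤ) := ⟨fun _ _ _ => le_rfl, fun _ => le_rfl⟩
  induction j with
  | zero => intro F; simp [tabSum]
  | succ j ih =>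
    intro F
    have : ∀ s : Fin l, ¬ Chamber (-Pi.single s 1 : Fin l → ℤ) := fun s h => by
      rw [← zero_sub] at h
      simpa using ((chamber_sub_iff h0 s).1 h).1
    simp [tabSum, ih, this, List.replicate_succ]

lemma ins_lt (T : List (Option (Fin l))) : ∀ {i p}, ins T i = some p → i < T.length := by
  induction T with
  | nil => simp [ins]
  | cons o T ih =>
    intro i p h
    cases o with
    | none =>
      rw [ins] at h
      split_ifs at h with h1
      · simp [h1]
      · obtain ⟨q, hq, -⟩ := Option.map_eq_some_iff.1 h
        have := ih hq
        simp; omega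
    | some s =>
      rw [ins] at h
      obtain ⟨q, hq, -⟩ := Option.map_eq_some_iff.1 h
      have := ih hq
      simp; omega

lemma ins_length_eq_none (T : List (Option (Fin l))) : ins T T.length = none := by
  by_contra h
  obtain ⟨p, hp⟩ := Option.ne_none_iff_exists'.1 h
  exact absurd (ins_lt T hp) (lt_irrefl _)

open Classical in
lemma insSum_none (T : List (Option (Fin l))) (F) :
    insSum (none :: T) F =
      (if h : ∃ r, shape T r = 0 then
        F (some (lastRow (shape T) h.choose) :: T, lastRow (shape T) h.choose) else 0) +
      insSum T (fun p => F (none :: p.1, p.2)) := by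
  rw [insSum, List.length_cons, sum_range_succ, add_comm]
  congr 1
  · simp only [ins, if_true]
    split_ifs <;> rfl
  · refine sum_congr rfl fun i hi => ?_
    have : i ≠ T.length := by have := mem_range.1 hi; omega
    simp only [ins, this, if_false]
    cases ins T i <;> rfl

lemma insSum_some (s : Fin l) (T : List (Option (Fin l))) (F) :
    insSum (some s :: T) F =
      insSum T (fun p => if p.2 = s then
        F (some (lastRow (shape T + Pi.single s 1) s) :: p.1, lastRow (shape T + Pi.single s 1) s)
      else F (some s :: p.1, p.2)) := by
  rw [insSum, List.length_cons, sum_range_succ]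
  simp only [ins, ins_length_eq_none]
  simp only [Option.map_none, Option.elim_none, add_zero]
  refine sum_congr rfl fun i hi => ?_
  cases ins T i with
  | none => rfl
  | some p => simp only [Option.map_some, Option.elim_some]; split_ifs <;> rfl

open Classical in
lemma sum_addable {v : Fin l → ℤ} (hv : Chamber v) (W : Fin l → ℕ) :
    (∑ c, if Chamber (v + Pi.single c 1) then W c else 0) =
      (if h : ∃ r, v r = 0 then W (lastRow v h.choose) else 0) +
      ∑ s, if Chamber (v - Pi.single s 1) then W (lastRow v s) else 0 := by
  have key : (∑ s, if Chamber (v - Pi.single s 1) then W (lastRow v s) else 0) =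
      ∑ c, if Chamber (v + Pi.single c 1) ∧ 0 < v c then W c else 0 := by
    rw [← sum_filter, ← sum_filter]
    refine sum_bij (fun s _ => lastRow v s) ?_ ?_ ?_ ?_
    · intro s hs
      simp only [mem_filter, mem_univ, true_and] at hs ⊢
      refine ⟨chamber_lastRow hv s, ?_⟩
      rw [lastRow_eq v]
      exact ((chamber_sub_iff hv s).1 hs).1
    · intro s hs s' hs' h
      simp only [mem_filter, mem_univ, true_and, chamber_sub_iff hv] at hs hs'
      have hh : v s = v s' := by rw [← lastRow_eq v s, h, lastRow_eq v]
      rcases lt_trichotomy s s' with h1 | h1 | h1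
      · exact absurd hh (hs'.2 _ h1).ne
      · exact h1
      · exact absurd hh.symm (hs.2 _ h1).ne
    · intro c hc
      simp only [mem_filter, mem_univ, true_and] at hc
      have hne : (univ.filter fun r => v r = v c).Nonempty := ⟨c, by simp⟩
      have hm := min'_mem _ hne
      simp only [mem_filter, mem_univ, true_and] at hm
      refine ⟨(univ.filter fun r => v r = v c).min' hne, ?_, ?_⟩
      · simp only [mem_filter, mem_univ, true_and, chamber_sub_iff hv]
        refine ⟨by rw [hm]; exact hc.2, fun r hr => lt_of_le_of_ne (hv.1 hr.le) fun h => ?_⟩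
        exact absurd (min'_le (univ.filter fun r => v r = v c) r (by simp [h, hm]))
          (not_le.2 hr)
      · rw [lastRow_congr v hm, lastRow_of_chamber hv hc.1]
    · intro s hs; rfl
  have key2 : (if h : ∃ r, v r = 0 then W (lastRow v h.choose) else 0) =
      ∑ c, if Chamber (v + Pi.single c 1) ∧ v c = 0 then W c else 0 := by
    split_ifs with h
    · rw [sum_eq_single (lastRow v h.choose)]
      · rw [if_pos]
        exact ⟨chamber_lastRow hv _, by rw [lastRow_eq v]; exact h.choose_spec⟩
      · intro c _ hc
        rw [if_neg]
        rintro ⟨h1, h2⟩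
        apply hc
        rw [← lastRow_of_chamber hv h1]
        exact lastRow_congr v (h2.trans h.choose_spec.symm)
      · simp
    · symm
      refine sum_eq_zero fun c _ => if_neg fun hc => h ⟨c, hc.2⟩
  rw [key, key2, ← sum_add_distrib]
  refine sum_congr rfl fun c _ => ?_
  have := hv.2 c
  by_cases h1 : Chamber (v + Pi.single c 1) <;> by_cases h2 : v c = 0
  · simp [h1, h2]
  · have : 0 < v c := by omega
    simp [h1, h2, this]
  · simp [h1]
  · simp [h1]

lemma chamber_exchange {v : Fin l → ℤ} (hv : Chamber v) {s c : Fin l} (h : c ≠ s) :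
    (Chamber (v - Pi.single s 1) ∧ Chamber (v - Pi.single s 1 + Pi.single c 1)) ↔
    (Chamber (v + Pi.single c 1) ∧ Chamber (v + Pi.single c 1 - Pi.single s 1)) := by
  constructor
  · rintro ⟨h1, h2⟩
    have h3 : Chamber (v + Pi.single c 1) := by
      rw [chamber_add_iff hv]
      rw [chamber_add_iff h1] at h2
      intro r hr
      have := h2 r hr
      simp only [Pi.sub_apply, Pi.single_apply, h, if_false] at this
      split_ifs at this <;> omega
    exact ⟨h3, by rwa [sub_add_eq_add_sub] at h2⟩
  · rintro ⟨h1, h2⟩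
    have h3 : Chamber (v - Pi.single s 1) := by
      rw [chamber_sub_iff hv]
      rw [chamber_sub_iff h1] at h2
      refine ⟨by simpa [Pi.single_apply, h.symm] using h2.1, ?_⟩
      intro r hr
      have := h2.2 r hr
      simp only [Pi.add_apply, Pi.single_apply, h.symm, if_false] at this
      split_ifs at this <;> omega
    exact ⟨h3, by rwa [sub_add_eq_add_sub]⟩

lemma sum_sum_diag {ι : Type*} [Fintype ι] [DecidableEq ι] (f : ι → ι → ℕ) :
    ∑ s, ∑ c, f s c = ∑ s, f s s + ∑ s, ∑ c, if c = s then 0 else f s c := by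
  rw [← sum_add_distrib]
  refine sum_congr rfl fun s _ => ?_
  have : f s s = ∑ c, if c = s then f s c else 0 := by simp
  rw [this, ← sum_add_distrib]
  refine sum_congr rfl fun c _ => ?_
  split_ifs <;> simp

open Classical in
/-- Insertion is a bijection, summed form. -/
lemma tabSum_insSum (j : ℕ) : ∀ (v : Fin l → ℤ) (F : List (Option (Fin l)) × Fin l → ℕ),
    Chamber v → tabSum j v (fun T => insSum T F) =
      ∑ c, if Chamber (v + Pi.single c 1) then
        tabSum j (v + Pi.single c 1) (fun T => F (T, c)) else 0 := by
  induction j with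
  | zero =>
    intro v F hv
    simp only [tabSum, insSum, List.length_nil, range_zero, sum_empty, ite_self]
    symm
    refine sum_eq_zero fun c _ => ?_
    have : v + Pi.single c 1 ≠ 0 := fun h => by
      have h1 := congrFun h c
      have h2 := hv.2 c
      simp at h1
      omega
    simp [this]
  | succ j ih =>
    intro v F hv
    have e1 : tabSum j v (fun T => insSum (none :: T) F) =
        (if h : ∃ r, v r = 0 then tabSum j v
          (fun T => F (some (lastRow v h.choose) :: T, lastRow v h.choose)) else 0) +
        ∑ c, if Chamber (v + Pi.single c 1) then
          tabSum j (v + Pi.single c 1) (fun T => F (none :: T, c)) else 0 := by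
      rw [← ih v (fun p => F (none :: p.1, p.2)) hv]
      simp only [insSum_none]
      rw [tabSum_add]
      congr 1
      split_ifs with h
      · refine tabSum_congr j _ _ _ hv fun T _ _ h3 => ?_
        subst h3
        rw [dif_pos h]
      · refine (tabSum_congr j _ _ (fun _ => 0) hv fun T _ _ h3 => ?_).trans (tabSum_zero j v)
        subst h3
        rw [dif_neg h]
    have e2 : ∀ s, (if Chamber (v - Pi.single s 1) then
          tabSum j (v - Pi.single s 1) (fun T => insSum (some s :: T) F) else 0) =
        ∑ c, if Chamber (v - Pi.single s 1) ∧ Chamber (v - Pi.single s 1 + Pi.single c 1) then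
          tabSum j (v - Pi.single s 1 + Pi.single c 1) (fun T => if c = s then
            F (some (lastRow v s) :: T, lastRow v s) else F (some s :: T, c)) else 0 := by
      intro s
      by_cases hs : Chamber (v - Pi.single s 1)
      · simp only [hs, if_true, true_and]
        rw [← ih (v - Pi.single s 1) (fun p => if p.2 = s then
            F (some (lastRow v s) :: p.1, lastRow v s) else F (some s :: p.1, p.2)) hs]
        refine tabSum_congr j _ _ _ hs fun T _ _ h3 => ?_
        rw [insSum_some, h3, sub_add_cancel]
      · simp [hs]
    have e3 : ∀ c, (if Chamber (v + Pi.single c 1) then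
          tabSum (j + 1) (v + Pi.single c 1) (fun T => F (T, c)) else 0) =
        (if Chamber (v + Pi.single c 1) then
          tabSum j (v + Pi.single c 1) (fun T => F (none :: T, c)) else 0) +
        ∑ s, if Chamber (v + Pi.single c 1) ∧ Chamber (v + Pi.single c 1 - Pi.single s 1) then
          tabSum j (v + Pi.single c 1 - Pi.single s 1) (fun T => F (some s :: T, c)) else 0 := by
      intro c
      by_cases hc : Chamber (v + Pi.single c 1)
      · simp [hc, tabSum]
      · simp [hc]
    have e6 : (∑ c, ∑ s, if Chamber (v + Pi.single c 1) ∧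
          Chamber (v + Pi.single c 1 - Pi.single s 1) then
          tabSum j (v + Pi.single c 1 - Pi.single s 1) (fun T => F (some s :: T, c)) else 0) =
        ∑ s, ∑ c, if Chamber (v + Pi.single c 1) ∧
          Chamber (v + Pi.single c 1 - Pi.single s 1) then
          tabSum j (v + Pi.single c 1 - Pi.single s 1) (fun T => F (some s :: T, c)) else 0 :=
      sum_comm
    rw [sum_congr rfl fun c _ => e3 c, sum_add_distrib, tabSum, e1,
      sum_congr rfl fun s _ => e2 s, sum_sum_diag, e6.trans (sum_sum_diag _)]
    have e4 : (∑ s, ∑ c, if c = s then 0 else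
        if Chamber (v - Pi.single s 1) ∧ Chamber (v - Pi.single s 1 + Pi.single c 1) then
          tabSum j (v - Pi.single s 1 + Pi.single c 1) (fun T => if c = s then
            F (some (lastRow v s) :: T, lastRow v s) else F (some s :: T, c)) else 0) =
        ∑ s, ∑ c, if c = s then 0 else
          if Chamber (v + Pi.single c 1) ∧ Chamber (v + Pi.single c 1 - Pi.single s 1) then
          tabSum j (v + Pi.single c 1 - Pi.single s 1) (fun T => F (some s :: T, c)) else 0 := by
      refine sum_congr rfl fun s _ => sum_congr rfl fun c _ => ?_
      by_cases h : c = s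
      · simp [h]
      · simp only [h, if_false, chamber_exchange hv h]
        rw [sub_add_eq_add_sub]
    have e5 := sum_addable hv (fun c => tabSum j v (fun T => F (some c :: T, c)))
    rw [e4]
    simp only [sub_add_cancel, add_sub_cancel_right, hv, and_true, if_true]
    rw [e5]
    ring

/-! ### Counting completions of a word -/

/-- The number of ways to complete the word `T` of length `j` to a matching. -/
def completions {l : ℕ} : ℕ → List (Option (Fin l)) → ℕ
  | 0, _ => 1
  | _ + 1, [] => 1
  | j + 1, some _ :: T => completions j T
  | j + 1, none :: T => insSum T fun p => completions j p.1

open Classical in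
/-- The number of walks of length `j` in the chamber, from `v` to the origin. -/
def walks {l : ℕ} : ℕ → (Fin l → ℤ) → ℕ
  | 0, v => if v = 0 then 1 else 0
  | j + 1, v => ∑ s, ((if Chamber (v - Pi.single s 1) then walks j (v - Pi.single s 1) else 0) +
      if Chamber (v + Pi.single s 1) then walks j (v + Pi.single s 1) else 0)

lemma tabSum_completions (j : ℕ) : ∀ v : Fin l → ℤ, Chamber v →
    tabSum j v (completions j) = walks j v := by
  induction j with
  | zero => intro v hv; simp [tabSum, completions, walks]
  | succ j ih =>
    intro v hv
    simp only [tabSum, completions, walks]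
    rw [tabSum_insSum j v _ hv, sum_add_distrib, add_comm]
    congr 1 <;> refine sum_congr rfl fun s _ => ?_ <;> split_ifs with h <;>
      first | exact ih _ h | rfl

lemma completions_replicate (j : ℕ) :
    completions j (List.replicate j (none : Option (Fin l))) = walks j (0 : Fin l → ℤ) := by
  rw [← tabSum_completions j 0 ⟨fun _ _ _ => le_rfl, fun _ => le_rfl⟩, tabSum_zero_shape]

/-- The number of nonzero entries. -/
def supp {l : ℕ} (v : Fin l → ℤ) : ℕ := (univ.filter fun r => v r ≠ 0).card

/-- The number of nonzero rows of the shape of the initial part of length `a`. -/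
def rows {l : ℕ} : List (Option (Fin l)) → ℕ → ℕ
  | [], _ => 0
  | o :: T, a => if T.length < a then supp (shape (o :: T)) else rows T a

/-- Whether the letter `a` is present in the word. -/
def filled {l : ℕ} : List (Option (Fin l)) → ℕ → Prop
  | [], _ => False
  | o :: T, a => if a = T.length then o.isSome = true else filled T a

lemma rows_of_le (T : List (Option (Fin l))) {a : ℕ} (h : T.length ≤ a) :
    rows T a = supp (shape T) := by
  cases T with
  | nil => simp [rows, supp, shape]
  | cons o T => rw [rows, if_pos (by simpa using h)]

lemma rows_le (T : List (Option (Fin l))) (a : ℕ) : rows T a ≤ l := by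
  induction T with
  | nil => simp [rows]
  | cons o T ih =>
    rw [rows]
    split_ifs
    · exact (card_le_univ _).trans (by simp)
    · exact ih

lemma Valid.chamber {T : List (Option (Fin l))} (h : Valid T) : Chamber (shape T) := by
  cases T with
  | nil => exact ⟨fun _ _ _ => le_rfl, fun _ => le_rfl⟩
  | cons o T => exact h.2

/-- A finite set of indices is final if it is closed upwards; such sets are nested. -/
lemma card_union_of_upper {s t : Finset (Fin l)} (hs : ∀ a ∈ s, ∀ b, a ≤ b → b ∈ s)
    (ht : ∀ a ∈ t, ∀ b, a ≤ b → b ∈ t) : (s ∪ t).card = max s.card t.card := by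
  have : s ⊆ t ∨ t ⊆ s := by
    by_contra! h
    obtain ⟨⟨a, ha, ha'⟩, b, hb, hb'⟩ := not_subset.1 h.1, not_subset.1 h.2
    rcases le_total a b with hab | hab
    · exact hb' (hs a ha b hab)
    · exact ha' (ht b hb a hab)
  rcases this with h | h
  · rw [union_eq_right.2 h, max_eq_right (card_le_card h)]
  · rw [union_eq_left.2 h, max_eq_left (card_le_card h)]

lemma Chamber.upper {v : Fin l → ℤ} (h : Chamber v) :
    ∀ a ∈ univ.filter (fun r => v r ≠ 0), ∀ b, a ≤ b → b ∈ univ.filter (fun r => v r ≠ 0) := by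
  intro a ha b hab
  simp only [mem_filter, mem_univ, true_and] at ha ⊢
  have := h.1 hab
  have := h.2 a
  omega

lemma chamber_union {v : Fin l → ℤ} {s c : Fin l} (h : c ≠ s)
    (h1 : Chamber (v + Pi.single s 1)) (h2 : Chamber (v + Pi.single c 1)) :
    Chamber (v + Pi.single c 1 + Pi.single s 1) := by
  refine ⟨fun a b hab => ?_, fun r => ?_⟩
  · have e1 := h1.1 hab
    have e2 := h2.1 hab
    simp only [Pi.add_apply, Pi.single_apply] at e1 e2 ⊢
    split_ifs at e1 e2 ⊢ <;> omega
  · have e1 := h1.2 r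
    have e2 := h2.2 r
    simp only [Pi.add_apply, Pi.single_apply] at e1 e2 ⊢
    split_ifs at e1 e2 ⊢ <;> omega

lemma supp_union {v : Fin l → ℤ} {s c : Fin l} (hv : Chamber v)
    (h1 : Chamber (v + Pi.single s 1)) (h2 : Chamber (v + Pi.single c 1)) :
    supp (v + Pi.single c 1 + Pi.single s 1) =
      max (supp (v + Pi.single s 1)) (supp (v + Pi.single c 1)) := by
  rw [supp, supp, supp, ← card_union_of_upper h1.upper h2.upper]
  congr 1
  ext r
  have := hv.2 r
  simp only [mem_filter, mem_univ, true_and, mem_union, Pi.add_apply, Pi.single_apply]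
  split_ifs <;> omega

lemma supp_add_of_ne_zero {v : Fin l → ℤ} {r : Fin l} (hv : Chamber v) (h : v r ≠ 0) :
    supp (v + Pi.single r 1) = supp v := by
  rw [supp, supp]
  congr 1
  ext a
  have := hv.2 a
  simp only [mem_filter, mem_univ, true_and, Pi.add_apply, Pi.single_apply]
  split_ifs with h1
  · subst h1; omega
  · simp

lemma supp_add_of_eq_zero {v : Fin l → ℤ} {r : Fin l} (h : v r = 0) :
    supp (v + Pi.single r 1) = supp v + 1 := by
  rw [supp, supp, ← card_insert_of_notMem (a := r) (by simp [h])]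
  congr 1
  ext a
  simp only [mem_filter, mem_univ, true_and, mem_insert, Pi.add_apply, Pi.single_apply]
  by_cases h1 : a = r
  · subst h1; simp [h]
  · simp [h1]

/-- The properties of insertion in a word. -/
structure InsSpec {l : ℕ} (T : List (Option (Fin l))) (i : ℕ)
    (p : List (Option (Fin l)) × Fin l) : Prop where
  length_eq : p.1.length = T.length
  valid : Valid p.1
  shape_eq : shape p.1 = shape T + Pi.single p.2 1
  filled_iff : ∀ a, filled p.1 a ↔ filled T a ∨ a = i
  rows_le : ∀ a ≤ i, rows p.1 a = rows T a
  rows_gt : ∀ a, i < a → rows p.1 a = max (rows T a) (rows T i + 1)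

lemma insSpec (T : List (Option (Fin l))) : ∀ {i p}, Valid T → ins T i = some p →
    InsSpec T i p := by
  induction T with
  | nil => simp [ins]
  | cons o T ih =>
    intro i p hT h
    have hi := ins_lt _ h
    simp only [List.length_cons] at hi
    cases o with
    | none =>
      rw [ins] at h
      split_ifs at h with h1 h2
      · simp only [Option.some.injEq] at h
        subst h1
        set r := lastRow (shape T) h2.choose with hr
        have hr0 : shape T r = 0 := by rw [hr, lastRow_eq (shape T)]; exact h2.choose_spec
        subst h
        have hc : Chamber (shape T + Pi.single r 1) := chamber_lastRow hT.1.chamber _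
        refine ⟨rfl, ⟨hT.1, hc⟩, rfl, fun a => ?_, fun a ha => ?_, fun a ha => ?_⟩
        · simp only [filled]
          split_ifs with h3 <;> simp [h3]
        · simp only [rows]
          rw [if_neg (by omega), if_neg (by omega)]
        · simp only [rows, ha, if_true, lt_irrefl, if_false, shape]
          rw [rows_of_le T le_rfl, supp_add_of_eq_zero hr0]
          omega
      · obtain ⟨q, hq, rfl⟩ := Option.map_eq_some_iff.1 h
        have I := ih hT.1 hq
        have hlen := I.length_eq
        refine ⟨by simp [hlen], ⟨I.valid, I.valid.chamber⟩, I.shape_eq, fun a => ?_,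
          fun a ha => ?_, fun a ha => ?_⟩
        · have := I.filled_iff a
          simp only [filled, hlen]
          split_ifs with h3
          · simp; omega
          · exact this
        · simp only [rows, hlen]
          rw [if_neg (by omega), if_neg (by omega), I.rows_le a ha]
        · have e := I.rows_gt a ha
          simp only [rows, hlen]
          rw [if_neg (c := T.length < i) (by omega)]
          split_ifs with h4
          · rw [rows_of_le _ (by omega), rows_of_le T (by omega)] at e
            exact e
          · exact e
    | some s =>
      rw [ins] at h
      obtain ⟨q, hq, h⟩ := Option.map_eq_some_iff.1 h
      have I := ih hT.1 hq
      have hlt := ins_lt _ hq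
      have hlen := I.length_eq
      have hsh := I.shape_eq
      have hv := hT.1.chamber
      have hs : Chamber (shape T + Pi.single s 1) := hT.2
      have hc := I.valid.chamber
      rw [hsh] at hc
      have e := I.rows_gt (T.length) hlt
      rw [rows_of_le _ (by omega), rows_of_le T le_rfl, hsh] at e
      have main : ∀ r c, p = (some r :: q.1, c) →
          shape q.1 + Pi.single r 1 = shape (some s :: T) + Pi.single c 1 →
          Chamber (shape q.1 + Pi.single r 1) →
          supp (shape q.1 + Pi.single r 1) =
            max (supp (shape T + Pi.single s 1)) (rows T i + 1) →
          InsSpec (some s :: T) i p := by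
        rintro r c rfl h1 h2 h3
        refine ⟨by simp [hlen], ⟨I.valid, h2⟩, h1, fun a => ?_, fun a ha => ?_, fun a ha => ?_⟩
        · have := I.filled_iff a
          simp only [filled, hlen]
          split_ifs with h3
          · simp
          · exact this
        · simp only [rows, hlen]
          rw [if_neg (by omega), if_neg (by omega), I.rows_le a ha]
        · simp only [rows, hlen]
          rw [if_neg (c := T.length < i) (by omega)]
          split_ifs with h4
          · exact h3
          · exact I.rows_gt a ha
      split_ifs at h with h1
      · subst h1
        refine main _ _ h.symm ?_ ?_ ?_
        · simp only [hsh, shape]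
        · rw [hsh]; exact chamber_lastRow hc _
        · have h0 : (shape T + Pi.single q.2 1 : Fin l → ℤ)
              (lastRow (shape T + Pi.single q.2 1) q.2) ≠ 0 := by
            rw [lastRow_eq (shape T + Pi.single q.2 1)]
            have := hv.2 q.2
            simp only [Pi.add_apply, Pi.single_eq_same]
            omega
          rw [hsh, supp_add_of_ne_zero hc h0]
          omega
      · refine main _ _ h.symm ?_ ?_ ?_
        · simp only [hsh, shape]; abel
        · rw [hsh]; exact chamber_union h1 hs hc
        · rw [hsh, supp_union hv hs hc, e]
          have : supp (shape T) ≤ supp (shape T + Pi.single s 1) := by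
            by_cases h0 : shape T s = 0
            · rw [supp_add_of_eq_zero h0]; omega
            · rw [supp_add_of_ne_zero hv h0]
          omega

lemma ins_eq_none_of_filled (T : List (Option (Fin l))) : ∀ {i}, filled T i → ins T i = none := by
  induction T with
  | nil => simp [ins]
  | cons o T ih =>
    intro i h
    rw [filled] at h
    cases o with
    | none =>
      split_ifs at h with h1
      · simp at h
      · simp [ins, h1, ih h]
    | some s =>
      split_ifs at h with h1
      · subst h1; simp [ins, ins_length_eq_none]
      · simp [ins, ih h]

lemma rows_eq_of_ins_eq_none (T : List (Option (Fin l))) : ∀ {i}, i < T.length → ¬ filled T i →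
    ins T i = none → rows T i = l := by
  induction T with
  | nil => simp
  | cons o T ih =>
    intro i hi h hn
    simp only [List.length_cons] at hi
    rw [filled] at h
    rw [rows, if_neg (by omega)]
    split_ifs at h with h1
    · cases o with
      | some s => simp at h
      | none =>
        rw [ins, if_pos h1] at hn
        split_ifs at hn with h2
        push Not at h2
        rw [rows_of_le T (by omega), supp, filter_true_of_mem (fun r _ => h2 r)]
        simp
    · refine ih (by omega) h ?_
      cases o with
      | some s => simpa [ins] using hn
      | none => simpa [ins, h1] using hn

/-! ### Matchings -/

/-- Fixed-point-free involutions. -/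
def IsMatching {N : ℕ} (σ : Equiv.Perm (Fin N)) : Prop := (∀ x, σ (σ x) = x) ∧ ∀ x, σ x ≠ x

/-- Matchings with at most `l` mutually nested arcs. -/
def GoodMatching {N : ℕ} (l : ℕ) (σ : Equiv.Perm (Fin N)) : Prop :=
  IsMatching σ ∧ ∀ s : Finset (Fin N), StrictAntiOn σ s → (∀ x ∈ s, x < σ x) → s.card ≤ l

/-- There are `k` mutually nested arcs whose left ends are below `a` and whose right ends are at
least `j`. -/
def HasNest {N : ℕ} (σ : Equiv.Perm (Fin N)) (j a k : ℕ) : Prop :=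
  ∃ s : Finset (Fin N), s.card = k ∧ StrictAntiOn σ s ∧ ∀ x ∈ s, (x : ℕ) < a ∧ j ≤ (σ x : ℕ)

/-- The word `T` of length `j` records the arcs of `σ` whose right ends are at least `j`. -/
structure Records {l N : ℕ} (σ : Equiv.Perm (Fin N)) (j : ℕ) (T : List (Option (Fin l))) :
    Prop where
  valid : Valid T
  length_eq : T.length = j
  filled_iff : ∀ a : Fin N, (a : ℕ) < j → (filled T a ↔ j ≤ (σ a : ℕ))
  hasNest_iff : ∀ a ≤ j, ∀ k, HasNest σ j a k ↔ k ≤ rows T a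
  card_le : ∀ s : Finset (Fin N), StrictAntiOn σ s → (∀ x ∈ s, x < σ x ∧ j ≤ (σ x : ℕ)) →
    s.card ≤ l

variable {N : ℕ}

lemma IsMatching.eq_iff {σ : Equiv.Perm (Fin N)} (h : IsMatching σ) {x y : Fin N} :
    σ x = y ↔ x = σ y := ⟨fun e => by rw [← e, h.1], fun e => by rw [e, h.1]⟩

lemma agree_left {σ τ : Equiv.Perm (Fin N)} (hσ : IsMatching σ) (hτ : IsMatching τ) {j : ℕ}
    (h : ∀ x : Fin N, j ≤ (x : ℕ) → τ x = σ x) {x : Fin N} (hx : j ≤ (σ x : ℕ)) : τ x = σ x := by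
  have := h _ hx
  rw [hσ.1] at this
  exact (hτ.eq_iff.1 this).symm

lemma HasNest.congr {σ τ : Equiv.Perm (Fin N)} (hσ : IsMatching σ) (hτ : IsMatching τ) {j a k : ℕ}
    (h : ∀ x : Fin N, j ≤ (x : ℕ) → τ x = σ x) (hn : HasNest σ j a k) : HasNest τ j a k := by
  obtain ⟨s, hs, hanti, hx⟩ := hn
  have key : ∀ x ∈ s, τ x = σ x := fun x hxs => agree_left hσ hτ h (hx x hxs).2
  refine ⟨s, hs, fun x hxs y hys hxy => ?_, fun x hxs => ?_⟩
  · rw [key x hxs, key y hys]; exact hanti hxs hys hxy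
  · rw [key x hxs]; exact hx x hxs

lemma Records.congr {σ τ : Equiv.Perm (Fin N)} (hσ : IsMatching σ) (hτ : IsMatching τ) {j : ℕ}
    (h : ∀ x : Fin N, j ≤ (x : ℕ) → τ x = σ x) {T : List (Option (Fin l))} (R : Records σ j T) :
    Records τ j T := by
  have h' : ∀ x : Fin N, j ≤ (x : ℕ) → σ x = τ x := fun x hx => (h x hx).symm
  refine ⟨R.valid, R.length_eq, fun a ha => ?_, fun a ha k => ?_, fun s hs hx => ?_⟩
  · rw [R.filled_iff a ha]
    constructor
    · intro h1; rwa [agree_left hσ hτ h h1]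
    · intro h1; rwa [agree_left hτ hσ h' h1]
  · rw [← R.hasNest_iff a ha k]
    exact ⟨HasNest.congr hτ hσ h', HasNest.congr hσ hτ h⟩
  · have key : ∀ x ∈ s, σ x = τ x := fun x hxs => agree_left hτ hσ h' (hx x hxs).2
    refine R.card_le s (fun x hxs y hys hxy => ?_) fun x hxs => ?_
    · rw [key x hxs, key y hys]; exact hs hxs hys hxy
    · rw [key x hxs]; exact hx x hxs

lemma Records.step_some {σ : Equiv.Perm (Fin N)} (hσ : IsMatching σ) {j : Fin N} {s : Fin l}
    {T : List (Option (Fin l))} (R : Records σ (j + 1) (some s :: T)) : Records σ j T := by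
  have hlen : T.length = j := by simpa using R.length_eq
  have hj : (j : ℕ) + 1 ≤ σ j := by
    rw [← R.filled_iff j (by omega), filled, if_pos hlen.symm]; rfl
  have hne : ∀ x : Fin N, (x : ℕ) < (σ x : ℕ) → (j : ℕ) ≤ σ x → (j : ℕ) + 1 ≤ σ x := by
    intro x hx h1
    rcases h1.eq_or_lt with h2 | h2
    · have : x = σ j := hσ.eq_iff.1 (Fin.ext h2.symm)
      rw [← this] at hj
      omega
    · exact h2
  refine ⟨R.valid.1, hlen, fun a ha => ?_, fun a ha k => ?_, fun t ht hx => ?_⟩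
  · have := R.filled_iff a (by omega)
    rw [filled, if_neg (by omega)] at this
    rw [this]
    exact ⟨fun h => by omega, fun h => hne a (by omega) h⟩
  · have := R.hasNest_iff a (by omega) k
    rw [rows, if_neg (by omega)] at this
    rw [← this]
    constructor
    · rintro ⟨t, h1, h2, h3⟩
      exact ⟨t, h1, h2, fun x hx => ⟨(h3 x hx).1, hne x (by have := h3 x hx; omega) (h3 x hx).2⟩⟩
    · rintro ⟨t, h1, h2, h3⟩
      exact ⟨t, h1, h2, fun x hx => ⟨(h3 x hx).1, by have := h3 x hx; omega⟩⟩
  · exact R.card_le t ht fun x hxt => ⟨(hx x hxt).1, hne x (hx x hxt).1 (hx x hxt).2⟩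

lemma strictAntiOn_insert {σ : Equiv.Perm (Fin N)} {s : Finset (Fin N)} {i : Fin N}
    (hs : StrictAntiOn σ s) (h : ∀ x ∈ s, x < i ∧ σ i < σ x) :
    StrictAntiOn σ (insert i s : Finset (Fin N)) := by
  intro x hx y hy hxy
  simp only [coe_insert, Set.mem_insert_iff, mem_coe] at hx hy
  rcases hx with rfl | hx <;> rcases hy with rfl | hy
  · exact absurd hxy (lt_irrefl _)
  · exact absurd hxy (h y hy).1.not_gt
  · exact (h x hx).2
  · exact hs hx hy hxy

/-- In a nest containing the arc with smallest right end, the other left ends are smaller. -/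
lemma lt_of_mem_nest {σ : Equiv.Perm (Fin N)} {j : Fin N} (hσ : IsMatching σ)
    {s : Finset (Fin N)} (hs : StrictAntiOn σ s) (h : ∀ x ∈ s, (j : ℕ) ≤ σ x) (hj : σ j ∈ s) :
    ∀ x ∈ s.erase (σ j), x < σ j ∧ (j : ℕ) + 1 ≤ σ x := by
  intro x hx
  obtain ⟨h1, h2⟩ := mem_erase.1 hx
  have h3 : (j : ℕ) + 1 ≤ σ x := by
    rcases (h x h2).eq_or_lt with h4 | h4
    · exact absurd (hσ.eq_iff.1 (Fin.ext h4.symm)) h1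
    · exact h4
  refine ⟨lt_of_le_of_ne (not_lt.1 fun h4 => ?_) h1, h3⟩
  have := hs hj h2 h4
  rw [hσ.1, Fin.lt_def] at this
  omega

lemma Records.step_none {σ : Equiv.Perm (Fin N)} (hσ : IsMatching σ) {j : Fin N}
    {T : List (Option (Fin l))} (R : Records σ (j + 1) (none :: T)) {p}
    (hp : ins T (σ j) = some p) : Records σ j p.1 := by
  have hlen : T.length = j := by simpa using R.length_eq
  have I := insSpec T R.valid.1 hp
  have hi : (σ j : ℕ) < j := by rw [← hlen]; exact ins_lt T hp
  have hfill : ∀ a : Fin N, (a : ℕ) < j → (filled T a ↔ (j : ℕ) + 1 ≤ σ a) := by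
    intro a ha
    have := R.filled_iff a (by omega)
    rwa [filled, if_neg (by omega)] at this
  have hrows : ∀ a ≤ (j : ℕ), ∀ k, HasNest σ (j + 1) a k ↔ k ≤ rows T a := by
    intro a ha k
    have := R.hasNest_iff a (by omega) k
    rwa [rows, if_neg (by omega)] at this
  have hlt : rows T (σ j) + 1 ≤ l := by
    have h1 := I.rows_gt j hi
    have h2 := rows_le p.1 j
    omega
  have hne : ∀ x : Fin N, x ≠ σ j → (j : ℕ) ≤ σ x → (j : ℕ) + 1 ≤ σ x := by
    intro x hx h1
    rcases h1.eq_or_lt with h4 | h4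
    · exact absurd (hσ.eq_iff.1 (Fin.ext h4.symm)) hx
    · exact h4
  refine ⟨I.valid, I.length_eq.trans hlen, fun a ha => ?_, fun a ha k => ?_, fun t ht hx => ?_⟩
  · rw [I.filled_iff, hfill a ha]
    constructor
    · rintro (h | h)
      · omega
      · rw [Fin.ext h, hσ.1]
    · intro h
      by_cases h1 : a = σ j
      · right; rw [h1]
      · left; exact hne a h1 h
  · rcases le_or_gt a (σ j : ℕ) with h | h
    · rw [I.rows_le a h, ← hrows a ha k]
      constructor
      · rintro ⟨t, h1, h2, h3⟩
        refine ⟨t, h1, h2, fun x hx => ⟨(h3 x hx).1, hne x (fun h4 => ?_) (h3 x hx).2⟩⟩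
        have := (h3 x hx).1
        rw [h4] at this
        omega
      · rintro ⟨t, h1, h2, h3⟩
        exact ⟨t, h1, h2, fun x hx => ⟨(h3 x hx).1, by have := h3 x hx; omega⟩⟩
    · rw [I.rows_gt a h, le_max_iff, ← hrows a ha k]
      constructor
      · rintro ⟨t, h1, h2, h3⟩
        by_cases h4 : σ j ∈ t
        · right
          have h5 := lt_of_mem_nest hσ h2 (fun x hx => (h3 x hx).2) h4
          have h6 : HasNest σ (j + 1) (σ j) (t.erase (σ j)).card :=
            ⟨_, rfl, h2.mono (by simp), h5⟩
          rw [hrows _ hi.le, card_erase_of_mem h4] at h6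
          omega
        · left
          exact ⟨t, h1, h2, fun x hx => ⟨(h3 x hx).1, hne x (fun h5 => h4 (h5 ▸ hx)) (h3 x hx).2⟩⟩
      · rintro (⟨t, h1, h2, h3⟩ | h1)
        · exact ⟨t, h1, h2, fun x hx => ⟨(h3 x hx).1, by have := h3 x hx; omega⟩⟩
        · rcases k with _ | k
          · exact ⟨∅, by simp [StrictAntiOn]⟩
          · obtain ⟨t, h1, h2, h3⟩ := (hrows _ hi.le k).2 (by omega)
            refine ⟨insert (σ j) t, ?_, strictAntiOn_insert h2 fun x hx => ⟨(h3 x hx).1, ?_⟩, ?_⟩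
            · rw [card_insert_of_notMem, h1]
              intro h4
              exact absurd (h3 _ h4).1 (lt_irrefl _)
            · rw [hσ.1, Fin.lt_def]
              exact (h3 x hx).2
            · intro x hx
              rcases mem_insert.1 hx with rfl | hx
              · exact ⟨h, by rw [hσ.1]⟩
              · have := h3 x hx
                omega
  · by_cases h4 : σ j ∈ t
    · have h5 := lt_of_mem_nest hσ ht (fun x hxt => (hx x hxt).2) h4
      have h6 : HasNest σ (j + 1) (σ j) (t.erase (σ j)).card :=
        ⟨_, rfl, ht.mono (by simp), h5⟩
      rw [hrows _ hi.le, card_erase_of_mem h4] at h6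
      omega
    · exact R.card_le t ht fun x hxt =>
        ⟨(hx x hxt).1, hne x (fun h5 => h4 (h5 ▸ hxt)) (hx x hxt).2⟩

lemma Records.not_good {σ : Equiv.Perm (Fin N)} (hσ : IsMatching σ) {j : Fin N}
    {T : List (Option (Fin l))} (R : Records σ (j + 1) (none :: T)) (hi : (σ j : ℕ) < j)
    (hp : ins T (σ j) = none) : ¬ GoodMatching l σ := by
  have hlen : T.length = j := by simpa using R.length_eq
  rintro ⟨-, hg⟩
  have h1 := R.filled_iff (σ j) (by omega)
  rw [filled, if_neg (by omega), hσ.1] at h1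
  have h2 := rows_eq_of_ins_eq_none T (by omega) (by rw [h1]; omega) hp
  have h3 := R.hasNest_iff (σ j) (by omega) l
  rw [rows, if_neg (by omega), h2] at h3
  obtain ⟨t, ht, hanti, hx⟩ := h3.2 le_rfl
  have h4 := hg (insert (σ j) t) (strictAntiOn_insert hanti fun x hxt => ⟨(hx x hxt).1, ?_⟩) ?_
  · rw [card_insert_of_notMem] at h4
    · omega
    · intro h5
      exact absurd (hx _ h5).1 (lt_irrefl _)
  · rw [hσ.1, Fin.lt_def]
    exact (hx x hxt).2
  · intro x hxt
    rcases mem_insert.1 hxt with rfl | hxt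
    · rw [hσ.1]; exact hi
    · have := hx x hxt
      rw [Fin.lt_def]; omega

lemma exists_rematch {σ : Equiv.Perm (Fin N)} (hσ : IsMatching σ) {i j : Fin N} (hij : i < j)
    (hj : σ j < j) (hi : (σ i : ℕ) ≤ j) : ∃ τ : Equiv.Perm (Fin N), IsMatching τ ∧
      (∀ x : Fin N, (j : ℕ) + 1 ≤ x → τ x = σ x) ∧ τ j = i := by
  have hsw : ∀ y, y ≠ σ j → y ≠ i → Equiv.swap (σ j) i y = y :=
    fun y h1 h2 => Equiv.swap_apply_of_ne_of_ne h1 h2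
  refine ⟨Equiv.swap (σ j) i * σ * Equiv.swap (σ j) i, ⟨fun x => ?_, fun x h => ?_⟩,
    fun x hx => ?_, ?_⟩
  · simp [hσ.1]
  · simp only [Equiv.Perm.mul_apply] at h
    apply hσ.2 (Equiv.swap (σ j) i x)
    apply (Equiv.swap (σ j) i).injective
    rw [h, Equiv.swap_apply_self]
  · simp only [Equiv.Perm.mul_apply]
    rw [hsw x (by rintro rfl; rw [Fin.lt_def] at hj; omega)
      (by rintro rfl; rw [Fin.lt_def] at hij; omega), hsw]
    · intro h
      have := σ.injective h
      subst this
      omega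
    · intro h
      rw [hσ.eq_iff.1 h] at hx
      omega
  · simp only [Equiv.Perm.mul_apply]
    rw [hsw j hj.ne' hij.ne', Equiv.swap_apply_left]

open Classical in
/-- A recorded word determines the number of good matchings that extend the record. -/
lemma card_extensions (j : ℕ) : ∀ (σ : Equiv.Perm (Fin N)) (T : List (Option (Fin l))), j ≤ N →
    IsMatching σ → Records σ j T →
    (univ.filter fun τ : Equiv.Perm (Fin N) =>
      GoodMatching l τ ∧ ∀ x : Fin N, j ≤ (x : ℕ) → τ x = σ x).card = completions j T := by
  induction j with
  | zero =>
    intro σ T _ hσ R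
    rw [completions, card_eq_one]
    refine ⟨σ, ?_⟩
    ext τ
    simp only [mem_filter, mem_univ, true_and, mem_singleton, Nat.zero_le, forall_const]
    constructor
    · exact fun h => Equiv.ext h.2
    · rintro rfl
      exact ⟨⟨hσ, fun s hs hx => R.card_le s hs fun x hxs => ⟨hx x hxs, Nat.zero_le _⟩⟩,
        fun _ => rfl⟩
  | succ j ih =>
    intro σ T hj hσ R
    obtain ⟨j, rfl⟩ : ∃ j' : Fin N, j = j' := ⟨⟨j, hj⟩, rfl⟩
    cases T with
    | nil => simpa using R.length_eq
    | cons o T =>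
      have hlen : T.length = j := by simpa using R.length_eq
      have hfj := R.filled_iff j (by omega)
      rw [filled, if_pos hlen.symm] at hfj
      cases o with
      | some s =>
        simp only [Option.isSome_some, true_iff] at hfj
        rw [completions, ← ih σ T (by omega) hσ (R.step_some hσ)]
        congr 1
        ext τ
        simp only [mem_filter, mem_univ, true_and]
        refine and_congr_right fun hτ => ⟨fun h x hx => ?_, fun h x hx => h x (by omega)⟩
        rcases hx.eq_or_lt with h1 | h1
        · rw [← Fin.ext h1]
          exact agree_left hσ hτ.1 h hfj
        · exact h x h1
      | none =>
        simp only [Option.isSome_none, Bool.false_eq_true, false_iff] at hfj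
        have hlt : ∀ τ, IsMatching τ → (∀ x : Fin N, (j : ℕ) + 1 ≤ x → τ x = σ x) → τ j < j := by
          intro τ hτ h
          refine lt_of_le_of_ne (not_lt.1 fun h1 => ?_) (hτ.2 j)
          have := agree_left hτ hσ (fun x hx => (h x hx).symm) h1
          rw [← this, Fin.lt_def] at h1
          omega
        rw [completions, insSum, hlen, card_eq_sum_card_fiberwise (f := fun τ => (τ j : ℕ))
          (t := range j)]
        · refine sum_congr rfl fun i hi => ?_
          obtain ⟨i, rfl⟩ : ∃ i' : Fin N, i = i' :=
            ⟨⟨i, (mem_range.1 hi).trans j.2⟩, rfl⟩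
          have hij : i < j := mem_range.1 hi
          cases hp : ins T i with
          | none =>
            rw [Option.elim_none, card_eq_zero, filter_filter, filter_eq_empty_iff]
            rintro τ - ⟨⟨h1, h2⟩, h3⟩
            have h3 : τ j = i := Fin.ext h3
            exact (R.congr hσ h1.1 h2).not_good h1.1 (by rw [h3]; exact hij) (by rwa [h3]) h1
          | some p =>
            rw [Option.elim_some]
            have hnf : ¬ filled T i := fun h => by
              rw [ins_eq_none_of_filled T h] at hp
              exact absurd hp (by simp)
            have hfi := R.filled_iff i (by omega)
            rw [filled, if_neg (by omega)] at hfi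
            rw [hfi] at hnf
            obtain ⟨τ, hτ, hag, hτj⟩ := exists_rematch hσ hij (hlt σ hσ fun _ _ => rfl) (by omega)
            rw [← ih τ p.1 (by omega) hτ ((R.congr hσ hτ hag).step_none hτ (by rwa [hτj]))]
            congr 1
            ext υ
            simp only [mem_filter, mem_univ, true_and, and_assoc]
            refine and_congr_right fun hυ => ⟨?_, fun h => ⟨fun x hx => ?_, ?_⟩⟩
            · rintro ⟨h1, h2⟩ x hx
              rcases hx.eq_or_lt with h3 | h3
              · rw [← Fin.ext h3, hτj]; exact Fin.ext h2
              · rw [h1 x h3, hag x h3]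
            · rw [h x (by omega), hag x hx]
            · rw [h j le_rfl, hτj]
        · intro τ hτ
          simp only [coe_filter, mem_univ, true_and, Set.mem_ofPred_eq] at hτ
          simpa using hlt τ hτ.1.1 hτ.2

lemma shape_replicate (j : ℕ) : shape (List.replicate j (none : Option (Fin l))) = 0 := by
  induction j with
  | zero => rfl
  | succ j ih => rw [List.replicate_succ, shape, ih]

lemma valid_replicate (j : ℕ) : Valid (List.replicate j (none : Option (Fin l))) := by
  induction j with
  | zero => trivial
  | succ j ih =>
    refine ⟨ih, ?_⟩
    rw [← List.replicate_succ, shape_replicate]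
    exact ⟨fun _ _ _ => le_rfl, fun _ => le_rfl⟩

lemma rows_replicate (j a : ℕ) : rows (List.replicate j (none : Option (Fin l))) a = 0 := by
  induction j with
  | zero => rfl
  | succ j ih =>
    rw [List.replicate_succ, rows, ih, ← List.replicate_succ, shape_replicate]
    simp [supp]

lemma not_filled_replicate (j a : ℕ) :
    ¬ filled (List.replicate j (none : Option (Fin l))) a := by
  induction j with
  | zero => simp [filled]
  | succ j ih =>
    rw [List.replicate_succ, filled]
    split_ifs
    · simp
    · exact ih

lemma records_replicate (σ : Equiv.Perm (Fin N)) :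
    Records σ N (List.replicate N (none : Option (Fin l))) := by
  refine ⟨valid_replicate N, by simp, fun a _ => ?_, fun a _ k => ?_, fun s _ hx => ?_⟩
  · have := (σ a).2
    simp only [not_filled_replicate, false_iff]
    omega
  · rw [rows_replicate]
    constructor
    · rintro ⟨s, rfl, -, hx⟩
      rw [Nat.le_zero, card_eq_zero, eq_empty_iff_forall_notMem]
      intro x hxs
      have := (hx x hxs).2
      omega
    · intro hk
      exact ⟨∅, by simp [StrictAntiOn]; omega⟩
  · have : s = ∅ := by
      rw [eq_empty_iff_forall_notMem]
      intro x hxs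
      have := (hx x hxs).2
      omega
    simp [this]

open Classical in
lemma card_goodMatching (n : ℕ) :
    (univ.filter fun τ : Equiv.Perm (Fin (2 * n)) => GoodMatching l τ).card =
      walks (2 * n) (0 : Fin l → ℤ) := by
  have h : IsMatching (Fin.revPerm : Equiv.Perm (Fin (2 * n))) := by
    refine ⟨fun x => by simp, fun x hx => ?_⟩
    have := congrArg Fin.val hx
    simp only [Fin.revPerm_apply, Fin.val_rev] at this
    omega
  rw [← completions_replicate, ← card_extensions (2 * n) _ _ le_rfl h (records_replicate _)]
  congr 1
  ext τ
  simp only [mem_filter, mem_univ, true_and, iff_self_and]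
  intro _ x hx
  omega

lemma lisLE_iff {π : Equiv.Perm (Fin N)} {m : ℕ} :
    lisLE π m ↔ ∀ s : Finset (Fin N),
      StrictAntiOn (Fin.revPerm * π : Equiv.Perm (Fin N)) (s : Set (Fin N)) → s.card ≤ m := by
  constructor
  · intro h s hs
    refine h s.card (s.orderEmbOfFin rfl) (s.orderEmbOfFin rfl).strictMono fun a b hab => ?_
    have := hs (s.orderEmbOfFin_mem rfl a) (s.orderEmbOfFin_mem rfl b)
      ((s.orderEmbOfFin rfl).strictMono hab)
    simpa using this
  · intro h k f hf hπ
    have := h (univ.map ⟨f, hf.injective⟩) ?_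
    · simpa using this
    · intro x hx y hy hxy
      simp only [coe_map, Function.Embedding.coeFn_mk, coe_univ, Set.image_univ,
        Set.mem_range] at hx hy
      obtain ⟨a, rfl⟩ := hx
      obtain ⟨b, rfl⟩ := hy
      simpa using hπ (hf.lt_iff_lt.1 hxy)

lemma nest_iff {σ : Equiv.Perm (Fin N)} (hσ : IsMatching σ) :
    (∀ s : Finset (Fin N), StrictAntiOn σ s → s.card ≤ 2 * l) ↔
      ∀ s : Finset (Fin N), StrictAntiOn σ s → (∀ x ∈ s, x < σ x) → s.card ≤ l := by
  constructor
  · intro h s hs hx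
    have hcross : ∀ x ∈ s, ∀ y ∈ s, x < σ y := by
      intro x hxs y hys
      rcases lt_trichotomy x y with h1 | rfl | h1
      · exact h1.trans (hx y hys)
      · exact hx x hxs
      · exact (hx x hxs).trans (hs hys hxs h1)
    have h1 := h (s ∪ s.map σ.toEmbedding) ?_
    · rw [card_union_of_disjoint, card_map] at h1
      · omega
      · rw [disjoint_left]
        intro x hxs hx'
        obtain ⟨y, hys, rfl⟩ := mem_map.1 hx'
        exact lt_irrefl _ (hcross _ hxs y hys)
    · intro x hxs y hys hxy
      simp only [coe_union, Set.mem_union, mem_coe, mem_map, Equiv.coe_toEmbedding] at hxs hys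
      rcases hxs with hxs | ⟨a, has, rfl⟩ <;> rcases hys with hys | ⟨b, hbs, rfl⟩
      · exact hs hxs hys hxy
      · rw [hσ.1]; exact hcross b hbs x hxs
      · exact absurd (hcross _ hys a has) hxy.not_gt
      · rw [hσ.1, hσ.1]
        by_contra h2
        rcases (not_lt.1 h2).eq_or_lt with rfl | h3
        · exact lt_irrefl _ hxy
        · exact absurd (hs has hbs h3) hxy.not_gt
  · intro h s hs
    have h1 := h (s.filter fun x => x < σ x) (hs.mono (coe_subset.2 (filter_subset _ _))) (by simp)
    have h2 := h ((s.filter fun x => ¬ x < σ x).map σ.toEmbedding) ?_ ?_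
    · rw [card_map] at h2
      have := card_filter_add_card_filter_not (s := s) (fun x => x < σ x)
      omega
    · intro x hxs y hys hxy
      simp only [coe_map, Equiv.coe_toEmbedding, coe_filter, Set.mem_image,
        Set.mem_ofPred_eq] at hxs hys
      obtain ⟨a, ha, rfl⟩ := hxs
      obtain ⟨b, hb, rfl⟩ := hys
      rw [hσ.1, hσ.1]
      by_contra h3
      rcases (not_lt.1 h3).eq_or_lt with rfl | h4
      · exact lt_irrefl _ hxy
      · exact absurd (hs ha.1 hb.1 h4) hxy.not_gt
    · intro x hxs
      obtain ⟨a, ha, rfl⟩ := mem_map.1 hxs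
      have := (mem_filter.1 ha).2
      simp only [Equiv.coe_toEmbedding, hσ.1]
      exact lt_of_le_of_ne (not_lt.1 this) (hσ.2 a)

lemma fSCount_eq_walks (n : ℕ) : fSCount n (2 * l) = walks (2 * n) (0 : Fin l → ℤ) := by
  classical
  rw [← card_goodMatching, fSCount, ← Fintype.card_subtype, ← Nat.card_eq_fintype_card]
  refine Nat.card_congr (Equiv.subtypeEquiv (Equiv.mulLeft Fin.revPerm) fun π => ?_)
  have hm : IsMatching (Fin.revPerm * π) ↔
      π = Fin.revPerm * π⁻¹ * Fin.revPerm ∧ ∀ x, π x ≠ Fin.revPerm x := by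
    refine and_congr ⟨fun h => ?_, fun h x => ?_⟩ (forall_congr' fun x => not_congr ?_)
    · ext x : 1
      have := h x
      simp only [Equiv.Perm.mul_apply, Fin.revPerm_apply] at this ⊢
      rw [← Fin.rev_eq_iff, Equiv.Perm.eq_inv_iff_eq, ← Fin.rev_eq_iff]
      exact this
    · have h1 := DFunLike.congr_fun h x
      simp only [Equiv.Perm.mul_apply, Fin.revPerm_apply] at h1 ⊢
      rw [← Fin.rev_eq_iff, Equiv.Perm.eq_inv_iff_eq] at h1
      rw [h1, Fin.rev_rev]
    · simp only [Equiv.Perm.mul_apply, Fin.revPerm_apply]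
      exact Fin.rev_eq_iff
  rw [← and_assoc, ← hm, Equiv.coe_mulLeft, GoodMatching, lisLE_iff]
  exact and_congr_right fun h => nest_iff h

/-! ### Reflection principle -/

/-- The number of simple walks on `ℤ` of length `n` from `0` to `m`. -/
def stepCount : ℕ → ℤ → ℕ
  | 0, m => if m = 0 then 1 else 0
  | n + 1, m => stepCount n (m - 1) + stepCount n (m + 1)

lemma stepCount_neg (n : ℕ) : ∀ m, stepCount n (-m) = stepCount n m := by
  induction n with
  | zero => intro m; simp [stepCount]
  | succ n ih =>
    intro m
    rw [stepCount, stepCount, ← ih (m - 1), ← ih (m + 1), add_comm]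
    congr 2 <;> ring

lemma stepCount_eq_zero (n : ℕ) : ∀ m : ℤ, (∀ a b : ℕ, a + b = n → (a : ℤ) - b ≠ m) →
    stepCount n m = 0 := by
  induction n with
  | zero =>
    intro m h
    have := h 0 0 rfl
    simp only [Nat.cast_zero, sub_zero] at this
    simp [stepCount, this.symm]
  | succ n ih =>
    intro m h
    rw [stepCount, ih, ih]
    · intro a b hab h1
      exact h a (b + 1) (by omega) (by push_cast; omega)
    · intro a b hab h1
      exact h (a + 1) b (by omega) (by push_cast; omega)

lemma stepCount_eq_choose (n : ℕ) : ∀ a b : ℕ, a + b = n →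
    stepCount n ((a : ℤ) - b) = n.choose a := by
  induction n with
  | zero => intro a b h; simp [stepCount, show a = 0 by omega, show b = 0 by omega]
  | succ n ih =>
    intro a b h
    rw [stepCount]
    rcases a with _ | a
    · rw [stepCount_eq_zero n (((0 : ℕ) : ℤ) - b - 1) (fun a' b' h1 h2 => by push_cast at h2; omega)]
      obtain ⟨b, rfl⟩ : ∃ b', b = b' + 1 := ⟨b - 1, by omega⟩
      have := ih 0 b (by omega)
      rw [show (((0 : ℕ) : ℤ) - (b + 1 : ℕ) + 1) = ((0 : ℕ) : ℤ) - b by push_cast; ring, this]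
      simp
    · rw [show (((a + 1 : ℕ) : ℤ) - b - 1) = (a : ℤ) - b by push_cast; ring, ih a b (by omega),
        Nat.choose_succ_succ]
      congr 1
      rcases b with _ | b
      · rw [stepCount_eq_zero, Nat.choose_eq_zero_of_lt (by omega)]
        intro a' b' h1 h2
        push_cast at h2
        omega
      · rw [← ih (a + 1) b (by omega)]
        congr 1
        push_cast
        ring

lemma stepCount_le (n : ℕ) : ∀ m, stepCount n m ≤ 2 ^ n := by
  induction n with
  | zero => intro m; rw [stepCount]; split_ifs <;> simp
  | succ n ih =>
    intro m
    have := ih (m - 1)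
    have := ih (m + 1)
    rw [stepCount, pow_succ]
    omega

open PowerSeries in
/-- The power series of the modified Bessel function `I_m(2t)`. -/
def besselSeries (m : ℤ) : ℝ⟦X⟧ := PowerSeries.mk fun n => (stepCount n m : ℝ) / n.factorial

lemma besselSeries_neg (m : ℤ) : besselSeries (-m) = besselSeries m := by
  simp [besselSeries, stepCount_neg]

lemma derivative_besselSeries (m : ℤ) : PowerSeries.derivative ℝ (besselSeries m) =
    besselSeries (m - 1) + besselSeries (m + 1) := by
  ext n
  have : (n.factorial : ℝ) ≠ 0 := by positivity
  have : (n : ℝ) + 1 ≠ 0 := by positivity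
  simp only [PowerSeries.coeff_derivative, besselSeries, PowerSeries.coeff_mk, map_add, stepCount,
    Nat.factorial_succ]
  push_cast
  field_simp

lemma derivation_prod {R A : Type*} [CommRing R] [CommRing A] [Algebra R A] (D : Derivation R A A)
    {ι : Type*} [DecidableEq ι] (s : Finset ι) (f : ι → A) :
    D (∏ i ∈ s, f i) = ∑ p ∈ s, ∏ i ∈ s, if i = p then D (f i) else f i := by
  induction s using Finset.induction_on with
  | empty => simp
  | insert a s ha ih =>
    rw [prod_insert ha, D.leibniz, ih, sum_insert ha, prod_insert ha, if_pos rfl, smul_eq_mul,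
      smul_eq_mul, mul_sum, add_comm]
    congr 1
    · rw [mul_comm]
      congr 1
      refine prod_congr rfl fun i hi => ?_
      rw [if_neg]
      rintro rfl
      exact ha hi
    · refine sum_congr rfl fun p hp => ?_
      rw [prod_insert ha, if_neg]
      rintro rfl
      exact ha hp

lemma derivation_det {R A : Type*} [CommRing R] [CommRing A] [Algebra R A] (D : Derivation R A A)
    {ι : Type*} [Fintype ι] [DecidableEq ι] (M : Matrix ι ι A) :
    D M.det = ∑ p, (M.updateCol p fun q => D (M q p)).det := by
  simp only [Matrix.det_apply', map_sum, D.leibniz, derivation_prod, smul_eq_mul,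
    Derivation.map_intCast, mul_zero, add_zero, mul_sum]
  rw [sum_comm]
  refine sum_congr rfl fun p _ => sum_congr rfl fun σ _ => ?_
  congr 1
  refine prod_congr rfl fun i _ => ?_
  rw [Matrix.updateCol_apply]
  split_ifs with h
  · rw [h]
  · rfl

/-- The determinant of Bessel series attached to a point of the weight lattice. -/
def detSeries (x : Fin l → ℤ) : PowerSeries ℝ :=
  Matrix.det (Matrix.of fun q p : Fin l =>
    besselSeries (x p - ((q : ℤ) + 1)) - besselSeries (x p + ((q : ℤ) + 1)))

lemma derivative_detSeries (x : Fin l → ℤ) : PowerSeries.derivative ℝ (detSeries x) =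
    ∑ p, (detSeries (x - Pi.single p 1) + detSeries (x + Pi.single p 1)) := by
  have := derivation_det (PowerSeries.derivative ℝ) (Matrix.of fun q p : Fin l =>
    besselSeries (x p - ((q : ℤ) + 1)) - besselSeries (x p + ((q : ℤ) + 1)))
  refine this.trans (sum_congr rfl fun p _ => ?_)
  set M : Matrix (Fin l) (Fin l) (PowerSeries ℝ) := Matrix.of fun q p : Fin l =>
    besselSeries (x p - ((q : ℤ) + 1)) - besselSeries (x p + ((q : ℤ) + 1)) with hM
  have h1 : ∀ ε : ℤ, detSeries (x + Pi.single p ε) = (M.updateCol p fun q =>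
      besselSeries (x p + ε - ((q : ℤ) + 1)) - besselSeries (x p + ε + ((q : ℤ) + 1))).det := by
    intro ε
    rw [detSeries]
    congr 1
    ext1 q r
    rw [Matrix.updateCol_apply]
    by_cases h : r = p
    · subst h; simp
    · simp [h, hM]
  have h2 : x - Pi.single p 1 = x + Pi.single p (-1) := by
    rw [Pi.single_neg, sub_eq_add_neg]
  rw [h2, h1, h1, ← Matrix.det_updateCol_add]
  congr 2
  funext q
  simp only [hM, Matrix.of_apply, map_sub, Pi.add_apply,
    derivative_besselSeries]
  rw [show x p + -1 - ((q : ℤ) + 1) = x p - (q + 1) - 1 by ring,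
    show x p + -1 + ((q : ℤ) + 1) = x p + (q + 1) - 1 by ring,
    show x p + 1 - ((q : ℤ) + 1) = x p - (q + 1) + 1 by ring,
    show x p + 1 + ((q : ℤ) + 1) = x p + (q + 1) + 1 by ring]
  ring

lemma detSeries_eq_zero_of_eq {x : Fin l → ℤ} {a b : Fin l} (h : a ≠ b) (hx : x a = x b) :
    detSeries x = 0 :=
  Matrix.det_zero_of_column_eq h fun q => by simp [hx]

lemma detSeries_eq_zero_of_zero {x : Fin l → ℤ} {a : Fin l} (hx : x a = 0) : detSeries x = 0 :=
  Matrix.det_eq_zero_of_column_eq_zero a fun q => by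
    rw [Matrix.of_apply, hx, zero_sub, zero_add, besselSeries_neg, sub_self]

/-- Half the sum of the positive roots, increasing convention. -/
def weylVector (l : ℕ) : Fin l → ℤ := fun p => (p : ℤ) + 1

lemma detSeries_add_of_not_chamber {v : Fin l → ℤ} (hv : Chamber v) {p : Fin l}
    (h : ¬ Chamber (v + Pi.single p 1)) : detSeries (v + Pi.single p 1 + weylVector l) = 0 := by
  rw [chamber_add_iff hv] at h
  push Not at h
  obtain ⟨r, hr, h⟩ := h
  rw [Fin.lt_def] at hr
  have hp : (p : ℕ) + 1 < l := by omega
  have h1 : v p ≤ v ⟨p + 1, hp⟩ := hv.1 (by rw [Fin.le_def]; simp)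
  have h2 : v ⟨p + 1, hp⟩ ≤ v r := hv.1 (by rw [Fin.le_def]; exact hr)
  have hne : (⟨p + 1, hp⟩ : Fin l) ≠ p := fun e => by
    have := congrArg Fin.val e
    simp at this
  refine detSeries_eq_zero_of_eq hne ?_
  simp [hne, weylVector]
  omega

lemma detSeries_sub_of_not_chamber {v : Fin l → ℤ} (hv : Chamber v) {p : Fin l}
    (h : ¬ Chamber (v - Pi.single p 1)) : detSeries (v - Pi.single p 1 + weylVector l) = 0 := by
  rw [chamber_sub_iff hv] at h
  have h0 := hv.2 p
  by_cases hp : (p : ℕ) = 0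
  · have hvp : v p = 0 := by
      by_contra h1
      refine h ⟨by omega, fun r hr => ?_⟩
      rw [Fin.lt_def] at hr
      omega
    refine detSeries_eq_zero_of_zero (a := p) ?_
    simp [weylVector, hvp, hp]
  · obtain ⟨p', hp'⟩ : ∃ p' : Fin l, (p' : ℕ) + 1 = p := ⟨⟨p - 1, by omega⟩, by simp; omega⟩
    have h1 : v p' ≤ v p := hv.1 (by rw [Fin.le_def]; omega)
    have hne : p' ≠ p := fun e => by rw [e] at hp'; omega
    have h2 : v p' = v p := by
      by_contra h3
      have := hv.2 p'
      refine h ⟨by omega, fun r hr => ?_⟩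
      have : v r ≤ v p' := hv.1 (by rw [Fin.lt_def] at hr; rw [Fin.le_def]; omega)
      omega
    refine detSeries_eq_zero_of_eq hne ?_
    simp [hne, weylVector, h2]
    omega

lemma constantCoeff_detSeries {v : Fin l → ℤ} (hv : Chamber v) :
    PowerSeries.constantCoeff (detSeries (v + weylVector l)) = if v = 0 then 1 else 0 := by
  rw [detSeries, RingHom.map_det]
  have hB : ∀ m, PowerSeries.constantCoeff (besselSeries m) = if m = 0 then 1 else 0 := by
    intro m
    rw [← PowerSeries.coeff_zero_eq_constantCoeff_apply, besselSeries, PowerSeries.coeff_mk,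
      stepCount]
    split_ifs <;> simp
  split_ifs with h
  · refine (congrArg Matrix.det (Matrix.ext fun q p => ?_)).trans (Matrix.det_one (n := Fin l))
    simp only [RingHom.mapMatrix_apply, Matrix.map_apply, Matrix.of_apply, map_sub, hB, h,
      weylVector, zero_add, Matrix.one_apply, Fin.ext_iff]
    rw [if_neg (c := ((p : ℤ) + 1 + (q + 1) = 0)) (by omega), sub_zero]
    congr 1
    rw [eq_iff_iff]
    omega
  · obtain ⟨a, ha⟩ : ∃ a, v a ≠ 0 := by
      by_contra! h1
      exact h (funext h1)
    have hl := a.2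
    have h1 : v a ≤ v ⟨l - 1, by omega⟩ := hv.1 (by rw [Fin.le_def]; simp; omega)
    have h2 := hv.2 a
    refine Matrix.det_eq_zero_of_column_eq_zero ⟨l - 1, by omega⟩ fun q => ?_
    simp only [RingHom.mapMatrix_apply, Matrix.map_apply, Matrix.of_apply, map_sub, hB,
      weylVector, Pi.add_apply]
    have := q.2
    rw [if_neg (by omega), if_neg (by omega), sub_zero]

open Classical in
/-- The reflection principle for walks in the chamber. -/
lemma coeff_detSeries (n : ℕ) : ∀ v : Fin l → ℤ, Chamber v →
    PowerSeries.coeff n (detSeries (v + weylVector l)) = (walks n v : ℝ) / n.factorial := by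
  induction n with
  | zero =>
    intro v hv
    rw [PowerSeries.coeff_zero_eq_constantCoeff_apply, constantCoeff_detSeries hv, walks]
    split_ifs <;> simp
  | succ n ih =>
    intro v hv
    have h1 := PowerSeries.coeff_derivative (detSeries (v + weylVector l)) n
    rw [derivative_detSeries, map_sum] at h1
    have h2 : ∀ p, PowerSeries.coeff n (detSeries (v + weylVector l - Pi.single p 1) +
        detSeries (v + weylVector l + Pi.single p 1)) =
        (((if Chamber (v - Pi.single p 1) then walks n (v - Pi.single p 1) else 0) +
          if Chamber (v + Pi.single p 1) then walks n (v + Pi.single p 1) else 0 : ℕ) : ℝ) /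
          n.factorial := by
      intro p
      rw [map_add, Nat.cast_add, add_div, add_sub_right_comm, add_right_comm]
      congr 1
      · split_ifs with h
        · exact ih _ h
        · rw [detSeries_sub_of_not_chamber hv h]; simp
      · split_ifs with h
        · exact ih _ h
        · rw [detSeries_add_of_not_chamber hv h]; simp
    rw [sum_congr rfl fun p _ => h2 p, ← sum_div, ← Nat.cast_sum, ← walks] at h1
    have h3 : (n.factorial : ℝ) ≠ 0 := by positivity
    have h4 : (n : ℝ) + 1 ≠ 0 := by positivity
    rw [Nat.factorial_succ]
    push_cast
    field_simp at h1 ⊢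
    linarith

/-! ### Evaluation of power series -/

/-- The power series `F` converges absolutely at `t`, with sum `a`. -/
def EvalsTo (t : ℝ) (F : PowerSeries ℝ) (a : ℝ) : Prop :=
  Summable (fun n => ‖PowerSeries.coeff n F * t ^ n‖) ∧
    ∑' n, PowerSeries.coeff n F * t ^ n = a

namespace EvalsTo

variable {t a b : ℝ} {F G : PowerSeries ℝ}

lemma add (hF : EvalsTo t F a) (hG : EvalsTo t G b) : EvalsTo t (F + G) (a + b) := by
  have h : ∀ n, PowerSeries.coeff n (F + G) * t ^ n =
      PowerSeries.coeff n F * t ^ n + PowerSeries.coeff n G * t ^ n := fun n => by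
    rw [map_add, add_mul]
  refine ⟨?_, ?_⟩
  · simp only [h]
    exact (hF.1.add hG.1).of_nonneg_of_le (fun _ => norm_nonneg _) fun _ => norm_add_le _ _
  · simp only [h]
    rw [hF.1.of_norm.tsum_add hG.1.of_norm, hF.2, hG.2]

lemma mul (hF : EvalsTo t F a) (hG : EvalsTo t G b) : EvalsTo t (F * G) (a * b) := by
  have h : ∀ n, PowerSeries.coeff n (F * G) * t ^ n = ∑ p ∈ antidiagonal n,
      (PowerSeries.coeff p.1 F * t ^ p.1) * (PowerSeries.coeff p.2 G * t ^ p.2) := fun n => by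
    rw [PowerSeries.coeff_mul, sum_mul]
    refine sum_congr rfl fun p hp => ?_
    rw [← mem_antidiagonal.1 hp, pow_add]
    ring
  refine ⟨?_, ?_⟩
  · simp only [h]
    exact summable_norm_sum_mul_antidiagonal_of_summable_norm
      (f := fun n => PowerSeries.coeff n F * t ^ n) (g := fun n => PowerSeries.coeff n G * t ^ n)
      hF.1 hG.1
  · simp only [h]
    rw [← hF.2, ← hG.2]
    exact (tsum_mul_tsum_eq_tsum_sum_antidiagonal_of_summable_norm
      (f := fun n => PowerSeries.coeff n F * t ^ n) (g := fun n => PowerSeries.coeff n G * t ^ n)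
      hF.1 hG.1).symm

lemma const (c : ℝ) : EvalsTo t (PowerSeries.C c) c := by
  have h : ∀ n, n ≠ 0 → PowerSeries.coeff n (PowerSeries.C c) * t ^ n = 0 := fun n hn => by
    rw [PowerSeries.coeff_C, if_neg hn, zero_mul]
  refine ⟨summable_of_ne_finset_zero (s := {0}) fun n hn => ?_, ?_⟩
  · rw [h n (by simpa using hn), norm_zero]
  · rw [tsum_eq_single 0 h]; simp

lemma sub (hF : EvalsTo t F a) (hG : EvalsTo t G b) : EvalsTo t (F - G) (a - b) := by
  have h : ∀ n, PowerSeries.coeff n (F - G) * t ^ n =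
      PowerSeries.coeff n F * t ^ n - PowerSeries.coeff n G * t ^ n := fun n => by
    rw [map_sub, sub_mul]
  refine ⟨?_, ?_⟩
  · simp only [h]
    exact (hF.1.add hG.1).of_nonneg_of_le (fun _ => norm_nonneg _) fun _ => norm_sub_le _ _
  · simp only [h]
    rw [hF.1.of_norm.tsum_sub hG.1.of_norm, hF.2, hG.2]

lemma sum {ι : Type*} (s : Finset ι) {f : ι → PowerSeries ℝ} {g : ι → ℝ}
    (h : ∀ i ∈ s, EvalsTo t (f i) (g i)) : EvalsTo t (∑ i ∈ s, f i) (∑ i ∈ s, g i) := by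
  classical
  induction s using Finset.induction_on with
  | empty => simpa using EvalsTo.const (t := t) 0
  | insert i s hi ih =>
    rw [sum_insert hi, sum_insert hi]
    exact (h i (by simp)).add (ih fun j hj => h j (by simp [hj]))

lemma prod {ι : Type*} (s : Finset ι) {f : ι → PowerSeries ℝ} {g : ι → ℝ}
    (h : ∀ i ∈ s, EvalsTo t (f i) (g i)) : EvalsTo t (∏ i ∈ s, f i) (∏ i ∈ s, g i) := by
  classical
  induction s using Finset.induction_on with
  | empty => simpa using EvalsTo.const (t := t) 1
  | insert i s hi ih =>
    rw [prod_insert hi, prod_insert hi]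
    exact (h i (by simp)).mul (ih fun j hj => h j (by simp [hj]))

lemma det {ι : Type*} [Fintype ι] [DecidableEq ι] {M : Matrix ι ι (PowerSeries ℝ)}
    {A : Matrix ι ι ℝ} (h : ∀ i j, EvalsTo t (M i j) (A i j)) : EvalsTo t M.det A.det := by
  rw [Matrix.det_apply', Matrix.det_apply']
  refine sum _ fun σ _ => mul ?_ (prod _ fun i _ => h _ _)
  simpa using EvalsTo.const (t := t) ((Equiv.Perm.sign σ : ℤ) : ℝ)

end EvalsTo

lemma evalsTo_besselSeries (m : ℤ) (t : ℝ) : EvalsTo t (besselSeries m) (besselI m t) := by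
  refine ⟨?_, ?_⟩
  · refine (Real.summable_pow_div_factorial (2 * |t|)).of_nonneg_of_le
      (fun _ => norm_nonneg _) fun n => ?_
    rw [besselSeries, PowerSeries.coeff_mk, norm_mul, norm_div, norm_pow, Real.norm_eq_abs,
      Real.norm_eq_abs, Real.norm_eq_abs, Nat.abs_cast, Nat.abs_cast, mul_pow, div_mul_eq_mul_div]
    have : (stepCount n m : ℝ) ≤ 2 ^ n := by exact_mod_cast stepCount_le n m
    gcongr
  · have hinj : Function.Injective fun k : ℕ => 2 * k + m.natAbs := fun a b h => by
      simp only at h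
      omega
    rw [besselI, ← hinj.tsum_eq]
    · refine tsum_congr fun k => ?_
      have h1 : stepCount (2 * k + m.natAbs) m = (2 * k + m.natAbs).choose k := by
        have h2 := stepCount_eq_choose (2 * k + m.natAbs) k (k + m.natAbs) (by ring)
        rw [← h2]
        rcases Int.natAbs_eq m with h | h
        · rw [← stepCount_neg]
          congr 1
          rw [Nat.cast_add]
          omega
        · congr 1
          rw [Nat.cast_add]
          omega
      rw [besselSeries, PowerSeries.coeff_mk, h1,
        Nat.cast_choose ℝ (show k ≤ 2 * k + m.natAbs by omega),
        show 2 * k + m.natAbs - k = k + m.natAbs by omega]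
      have : ((2 * k + m.natAbs).factorial : ℝ) ≠ 0 := by positivity
      field_simp
    · intro n hn
      by_contra h
      apply hn
      beta_reduce
      rw [besselSeries, PowerSeries.coeff_mk, stepCount_eq_zero]
      · simp
      · intro a b hab hm
        apply h
        rcases le_total a b with h1 | h1
        · exact ⟨a, by simp only; omega⟩
        · exact ⟨b, by simp only; omega⟩

lemma walks_eq_zero_of_odd (n : ℕ) : ∀ v : Fin l → ℤ, Odd ((n : ℤ) + ∑ r, v r) →
    walks n v = 0 := by
  induction n with
  | zero =>
    intro v h
    rw [walks, if_neg]
    rintro rfl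
    simp at h
  | succ n ih =>
    intro v h
    rw [walks]
    refine sum_eq_zero fun s _ => ?_
    rw [ih, ih]
    · simp
    · have : ((n : ℤ) + ∑ r, (v + Pi.single s 1 : Fin l → ℤ) r) = ((n + 1 : ℕ) : ℤ) + ∑ r, v r := by
        simp [sum_add_distrib]; ring
      rwa [this]
    · have : ((n : ℤ) + ∑ r, (v - Pi.single s 1 : Fin l → ℤ) r) =
          ((n + 1 : ℕ) : ℤ) + ∑ r, v r - 2 := by
        simp [sum_sub_distrib]; ring
      rw [this]
      exact h.sub_even even_two

/-- `Σ_{n≥0} f^S_{n,2l} · t^{2n}/(2n)! = det_{0≤j,k<l} ( I_{j−k}(2t) − I_{j+k+2}(2t) )`. -/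
theorem fS_gf_eq_bessel_det (l : ℕ) (t : ℝ) :
    ∑' n : ℕ, (fSCount n (2 * l) : ℝ) * t ^ (2 * n) / (Nat.factorial (2 * n) : ℝ) =
      Matrix.det (Matrix.of fun j k : Fin l =>
        besselI ((j : ℕ) - (k : ℕ) : ℤ) t -
          besselI ((j : ℕ) + (k : ℕ) + 2 : ℤ) t) := by
  have h0 : Chamber (0 : Fin l → ℤ) := ⟨fun _ _ _ => le_rfl, fun _ => le_rfl⟩
  have hdet : EvalsTo t (detSeries (0 + weylVector l)) (Matrix.det (Matrix.of fun j k : Fin l =>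
      besselI ((j : ℕ) - (k : ℕ) : ℤ) t - besselI ((j : ℕ) + (k : ℕ) + 2 : ℤ) t)) := by
    rw [← Matrix.det_transpose]
    refine EvalsTo.det fun q p => ?_
    simp only [Matrix.of_apply, Matrix.transpose_apply, weylVector, Pi.add_apply, Pi.zero_apply]
    rw [show (0 + ((p : ℤ) + 1) - (q + 1)) = (p : ℤ) - q by ring,
      show (0 + ((p : ℤ) + 1) + (q + 1)) = (p : ℤ) + q + 2 by ring]
    exact (evalsTo_besselSeries _ t).sub (evalsTo_besselSeries _ t)
  have hinj : Function.Injective fun n : ℕ => 2 * n := fun a b h => by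
    simp only at h
    omega
  rw [← hdet.2]
  refine Eq.trans ?_ (hinj.tsum_eq
    (f := fun n => PowerSeries.coeff n (detSeries (0 + weylVector l)) * t ^ n) ?_)
  · refine tsum_congr fun n => ?_
    rw [coeff_detSeries _ _ h0, fSCount_eq_walks, div_mul_eq_mul_div]
  · intro n hn
    by_contra h
    apply hn
    beta_reduce
    rw [coeff_detSeries _ _ h0, walks_eq_zero_of_odd n 0 ?_]
    · simp
    · simp only [Pi.zero_apply, sum_const_zero, add_zero, Int.odd_coe_nat]
      rw [← Nat.not_even_iff_odd]
      rintro ⟨k, hk⟩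
      exact h ⟨k, by simp only; omega⟩
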